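/- Let q be a positive integer, a an integer coprime to q, and s, z ∈ ℂ with 1 − Re(z) < Re(s) < Re(z). Then Σ_{r=1}^{q} Σ_{ℓ=1}^{q} e^{2πi·rℓa/q}·ζ_H(1−s+z, ℓ/q)·ζ_H(s+z, r/q) = q^{1+2z}·D(s+z, 2s−1; a/q), where all series involved converge absolutely (note Re(1−s+z) > 1 and Re(s+z) > 1). -/

import Mathlib

open Complex Real Finset

/-- The Hurwitz zeta series `ζ_H(w,x) = ∑_{n≥0} (n+x)^{-w}` (as a `tsum`). -/
noncomputable def hurwitzSeries (w : ℂ) (x : ℝ) : ℂ := ∑' n : ℕ, ((n : ℂ) + x) ^ (-w)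

/-- The `n`-th term of the Estermann series `D(u, α; x)`:
`e^{2πinx} σ_α(n) n^{-u}` (with value `0` at `n = 0`). -/
noncomputable def estTerm (u α : ℂ) (x : ℝ) (n : ℕ) : ℂ :=
  Complex.exp (2 * π * Complex.I * n * x) * (∑ d ∈ n.divisors, (d:ℂ)^α) * (n:ℂ)^(-u)

lemma aux_summable_shift (w : ℂ) (hw : 1 < w.re) (x : ℝ) (hx : 0 < x) :
    Summable (fun n : ℕ => ‖((n : ℂ) + x) ^ (-w)‖) := by
  have h := (Real.summable_one_div_nat_add_rpow x w.re).2 hw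
  refine h.congr fun n => ?_
  have hp : (0:ℝ) < n + x := by positivity
  have : ((n : ℂ) + x) = ((n + x : ℝ) : ℂ) := by push_cast; rfl
  rw [this, Complex.norm_cpow_eq_rpow_re_of_pos hp, abs_of_pos hp, Complex.neg_re,
    Real.rpow_neg hp.le, one_div]

lemma aux_norm_exp (q : ℕ) (b : ℤ) (k : ℕ) :
    ‖Complex.exp (2 * π * Complex.I * k * b / q)‖ = 1 := by
  have : (2 * π * Complex.I * k * b / q : ℂ) = ((2 * π * k * b / q : ℝ) : ℂ) * Complex.I := by
    push_cast; ring
  rw [this, Complex.norm_exp_ofReal_mul_I]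

lemma aux_exp_period (q : ℕ) (hq : 0 < q) (b : ℤ) (k m : ℕ) :
    Complex.exp (2 * π * Complex.I * (k + q * m : ℕ) * b / q) =
      Complex.exp (2 * π * Complex.I * k * b / q) := by
  rw [Complex.exp_eq_exp_iff_exists_int]
  refine ⟨m * b, ?_⟩
  have : (q : ℂ) ≠ 0 := by exact_mod_cast hq.ne'
  push_cast
  field_simp

lemma aux_summable (q : ℕ) (b : ℤ) (w : ℂ) (hw : 1 < w.re) :
    Summable (fun i : ℕ => Complex.exp (2 * π * Complex.I * (i + 1 : ℕ) * b / q) *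
      ((i + 1 : ℕ) : ℂ) ^ (-w)) := by
  refine Summable.of_norm ((aux_summable_shift w hw 1 one_pos).congr fun n => ?_)
  rw [norm_mul, aux_norm_exp, one_mul]
  push_cast; rfl

lemma aux_cpow (q : ℕ) (hq : 0 < q) (w : ℂ) (l m : ℕ) :
    ((l + q * m : ℕ) : ℂ) ^ (-w) = (q : ℂ) ^ (-w) * ((m : ℂ) + ((l : ℝ) / q : ℝ)) ^ (-w) := by
  have hq' : (q : ℝ) ≠ 0 := by exact_mod_cast hq.ne'
  have h : ((l + q * m : ℕ) : ℂ) = ((q : ℝ) : ℂ) * (((m : ℝ) + (l : ℝ) / q : ℝ) : ℂ) := by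
    rw [← Complex.ofReal_mul, ← Complex.ofReal_natCast]
    congr 1
    push_cast
    field_simp
    ring
  rw [h, Complex.mul_cpow_ofReal_nonneg (by positivity) (by positivity)]
  push_cast; rfl

lemma aux_tsum (q : ℕ) (hq : 0 < q) (b : ℤ) (w : ℂ) (hw : 1 < w.re) :
    ∑' i : ℕ, Complex.exp (2 * π * Complex.I * (i + 1 : ℕ) * b / q) *
      ((i + 1 : ℕ) : ℂ) ^ (-w) =
    ∑ l ∈ Finset.Icc 1 q, Complex.exp (2 * π * Complex.I * l * b / q) *
      ((q : ℂ) ^ (-w) * hurwitzSeries w ((l : ℝ) / q)) := by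
  have : NeZero q := ⟨hq.ne'⟩
  rw [Nat.sumByResidueClasses (aux_summable q b w hw) q]
  have key : ∀ j : ℕ, ∑' m : ℕ, Complex.exp (2 * π * Complex.I * (j + q * m + 1 : ℕ) * b / q) *
      ((j + q * m + 1 : ℕ) : ℂ) ^ (-w) =
      Complex.exp (2 * π * Complex.I * (1 + j : ℕ) * b / q) *
      ((q : ℂ) ^ (-w) * hurwitzSeries w (((1 + j : ℕ) : ℝ) / q)) := by
    intro j
    rw [hurwitzSeries, ← tsum_mul_left, ← tsum_mul_left]
    refine tsum_congr fun m => ?_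
    rw [show j + q * m + 1 = (1 + j) + q * m by ring, aux_exp_period q hq, aux_cpow q hq]
  simp_rw [key]
  rw [← Finset.Ico_add_one_right_eq_Icc, Finset.sum_Ico_eq_sum_range, Nat.add_sub_cancel]
  obtain ⟨k, rfl⟩ := Nat.exists_eq_succ_of_ne_zero hq.ne'
  exact Fin.sum_univ_eq_sum_range (fun j => Complex.exp (2 * π * Complex.I * (1 + j : ℕ) * b / (k+1 : ℕ)) *
      (((k+1 : ℕ) : ℂ) ^ (-w) * hurwitzSeries w (((1 + j : ℕ) : ℝ) / (k+1 : ℕ)))) (k+1)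

/-- the double series term -/
noncomputable def auxF (q : ℕ) (a : ℤ) (u v : ℂ) (p : ℕ+ × ℕ+) : ℂ :=
  Complex.exp (2 * π * Complex.I * ((p.1 : ℕ) * (p.2 : ℕ) : ℕ) * a / q) *
    (((p.1 : ℕ) : ℂ) ^ (-u) * ((p.2 : ℕ) : ℂ) ^ (-v))

lemma aux_summable_pnat (w : ℂ) (hw : 1 < w.re) :
    Summable (fun i : ℕ+ => ‖((i : ℕ) : ℂ) ^ (-w)‖) := by
  have := aux_summable_shift w hw 1 one_pos
  rw [← Equiv.pnatEquivNat.summable_iff] at this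
  refine this.congr fun n => ?_
  simp only [Function.comp, Equiv.pnatEquivNat_apply]
  congr 2
  have := PNat.natPred_add_one n
  rw [← this]; push_cast; simp

lemma auxF_summable (q : ℕ) (a : ℤ) (u v : ℂ) (hu : 1 < u.re) (hv : 1 < v.re) :
    Summable (auxF q a u v) := by
  have h := (aux_summable_pnat u hu).mul_of_nonneg (aux_summable_pnat v hv)
    (fun _ => norm_nonneg _) (fun _ => norm_nonneg _)
  refine Summable.of_norm (h.congr fun p => ?_)
  rw [auxF, norm_mul, aux_norm_exp, one_mul, norm_mul]

lemma auxF_fiber (q : ℕ) (a : ℤ) (s z : ℂ) (n : ℕ+) :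
    ∑' x : Nat.divisorsAntidiagonal (n : ℕ),
      auxF q a (1 - s + z) (s + z) (sigmaAntidiagonalEquivProd ⟨n, x⟩) =
    estTerm (s + z) (2 * s - 1) ((a : ℝ) / q) n := by
  have h : ∀ x : Nat.divisorsAntidiagonal (n : ℕ),
      auxF q a (1 - s + z) (s + z) (sigmaAntidiagonalEquivProd ⟨n, x⟩) =
      (fun y : ℕ × ℕ => Complex.exp (2 * π * Complex.I * (n : ℕ) * ((a : ℝ) / q : ℝ)) *
        ((y.1 : ℂ) ^ (2 * s - 1) * ((n : ℕ) : ℂ) ^ (-(s + z)))) x.1 := by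
    rintro ⟨⟨c, d⟩, hx⟩
    obtain ⟨hcd, hn⟩ := Nat.mem_divisorsAntidiagonal.1 hx
    simp only at hcd
    have hc : c ≠ 0 := by rintro rfl; simp at hcd; exact hn hcd.symm
    simp only [auxF, sigmaAntidiagonalEquivProd, divisorsAntidiagonalFactors, Equiv.coe_fn_mk,
      PNat.mk_coe]
    rw [hcd]
    congr 1
    · congr 1; push_cast; ring
    · rw [← hcd, Nat.cast_mul, Complex.natCast_mul_natCast_cpow, ← mul_assoc,
        ← Complex.cpow_add _ _ (by exact_mod_cast hc)]
      congr 2; ring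
  simp_rw [h]
  rw [Finset.tsum_subtype (Nat.divisorsAntidiagonal (n:ℕ)) (fun y : ℕ × ℕ => Complex.exp (2 * π * Complex.I * (n : ℕ) * ((a : ℝ) / q : ℝ)) *
        ((y.1 : ℂ) ^ (2 * s - 1) * ((n : ℕ) : ℂ) ^ (-(s + z)))), ← Finset.mul_sum, ← Finset.sum_mul,
     Nat.sum_divisorsAntidiagonal (fun i _ => (i : ℂ) ^ (2 * s - 1)), estTerm]
  ring

lemma aux_lhs (q : ℕ) (hq : 0 < q) (a : ℤ) (u v : ℂ) (hu : 1 < u.re) (hv : 1 < v.re) :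
    ∑' p, auxF q a u v p = ∑ r ∈ Finset.Icc 1 q, ∑ l ∈ Finset.Icc 1 q,
        Complex.exp (2 * π * Complex.I * r * l * a / q) *
          ((q : ℂ) ^ (-u) * hurwitzSeries u ((l : ℝ)/q)) *
          ((q : ℂ) ^ (-v) * hurwitzSeries v ((r : ℝ)/q)) := by
  rw [(auxF_summable q a u v hu hv).tsum_prod]
  have inner : ∀ i : ℕ+, ∑' j : ℕ+, auxF q a u v (i, j) =
      ∑ r ∈ Finset.Icc 1 q, (Complex.exp (2 * π * Complex.I * (i : ℕ) * ((r * a : ℤ) : ℂ) / q) *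
        ((i : ℕ) : ℂ) ^ (-u)) * ((q : ℂ) ^ (-v) * hurwitzSeries v ((r : ℝ)/q)) := by
    intro i
    have := aux_tsum q hq (i * a) v hv
    rw [← tsum_pnat_eq_tsum_succ (f := fun k : ℕ => Complex.exp (2 * π * Complex.I * k * ((i * a : ℤ) : ℂ) / q) *
      (k : ℂ) ^ (-v))] at this
    calc _ = ((i : ℕ) : ℂ) ^ (-u) * ∑' k : ℕ+, Complex.exp (2 * π * Complex.I * (k : ℕ) * ((i * a : ℤ) : ℂ) / q) *
      ((k : ℕ) : ℂ) ^ (-v) := by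
          rw [← tsum_mul_left]
          refine tsum_congr fun k => ?_
          rw [auxF, mul_left_comm]
          congr 3
          push_cast; ring
      _ = _ := by
          rw [this, Finset.mul_sum]
          refine Finset.sum_congr rfl fun r _ => ?_
          rw [← mul_assoc, mul_comm (((i : ℕ) : ℂ) ^ (-u))]
          congr 4
          push_cast; ring
  simp_rw [inner]
  rw [Summable.tsum_finsetSum]
  · refine Finset.sum_congr rfl fun r _ => ?_
    rw [tsum_mul_right, tsum_pnat_eq_tsum_succ (f := fun k : ℕ => Complex.exp (2 * π * Complex.I * k * ((r * a : ℤ) : ℂ) / q) *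
      (k : ℂ) ^ (-u)), aux_tsum q hq _ u hu, Finset.sum_mul]
    refine Finset.sum_congr rfl fun l _ => ?_
    congr 4
    push_cast; ring
  · intro r _
    refine Summable.mul_right _ (Summable.of_norm ((aux_summable_pnat u hu).congr fun i => ?_))
    rw [norm_mul, aux_norm_exp, one_mul]

/-- The bilinear sum of Hurwitz zeta values equals `q^{1+2z} D(s+z, 2s-1; a/q)`. -/
theorem hurwitz_sum_eq_estermann (q : ℕ) (hq : 0 < q) (a : ℤ)
    (hco : IsCoprime a (q : ℤ)) (s z : ℂ) (h1 : 1 - z.re < s.re) (h2 : s.re < z.re) :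
    (∀ x : ℝ, 0 < x → x ≤ 1 →
      Summable (fun n : ℕ => ‖((n : ℂ) + x) ^ (-(1 - s + z))‖)) ∧
    (∀ x : ℝ, 0 < x → x ≤ 1 →
      Summable (fun n : ℕ => ‖((n : ℂ) + x) ^ (-(s + z))‖)) ∧
    Summable (fun n : ℕ => ‖estTerm (s + z) (2*s - 1) ((a : ℝ)/q) n‖) ∧
    (∑ r ∈ Finset.Icc 1 q, ∑ ℓ ∈ Finset.Icc 1 q,
        Complex.exp (2 * π * Complex.I * r * ℓ * a / q) *
          hurwitzSeries (1 - s + z) ((ℓ : ℝ)/q) * hurwitzSeries (s + z) ((r : ℝ)/q)) =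
      (q : ℂ) ^ (1 + 2*z) * ∑' n : ℕ, estTerm (s + z) (2*s - 1) ((a : ℝ)/q) n := by
  have hu : 1 < (1 - s + z).re := by simp; linarith
  have hv : 1 < (s + z).re := by simp; linarith
  have hF := auxF_summable q a _ _ hu hv
  have hS : Summable (fun c => auxF q a (1 - s + z) (s + z) (sigmaAntidiagonalEquivProd c)) :=
    sigmaAntidiagonalEquivProd.summable_iff.2 hF
  have hE : ∀ n ∉ Set.range ((↑) : ℕ+ → ℕ), estTerm (s + z) (2*s - 1) ((a : ℝ)/q) n = 0 := by
    intro n hn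
    have : n = 0 := by
      by_contra h
      exact hn ⟨⟨n, Nat.pos_of_ne_zero h⟩, rfl⟩
    subst this
    simp [estTerm]
  have hsum : Summable (fun n : ℕ => estTerm (s + z) (2*s - 1) ((a : ℝ)/q) n) := by
    rw [← PNat.coe_injective.summable_iff hE]
    refine hS.sigma.congr fun n => ?_
    exact auxF_fiber q a s z n
  refine ⟨fun x hx _ => aux_summable_shift _ hu x hx, fun x hx _ => aux_summable_shift _ hv x hx,
    hsum.norm, ?_⟩
  have hR : ∑' n : ℕ, estTerm (s + z) (2*s - 1) ((a : ℝ)/q) n =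
      ∑' p, auxF q a (1 - s + z) (s + z) p := by
    rw [← sigmaAntidiagonalEquivProd.tsum_eq, Summable.tsum_sigma hS,
      ← PNat.coe_injective.tsum_eq (Function.support_subset_iff'.2 hE)]
    exact tsum_congr fun n => (auxF_fiber q a s z n).symm
  rw [hR, aux_lhs q hq a _ _ hu hv, Finset.mul_sum]
  have hq' : (q : ℂ) ≠ 0 := by exact_mod_cast hq.ne'
  have hpow : (q : ℂ) ^ (1 + 2 * z) * ((q : ℂ) ^ (-(1 - s + z)) * (q : ℂ) ^ (-(s + z))) = 1 := by
    rw [← Complex.cpow_add _ _ hq', ← Complex.cpow_add _ _ hq']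
    convert Complex.cpow_zero _ using 2
    ring
  refine Finset.sum_congr rfl fun r _ => ?_
  rw [Finset.mul_sum]
  refine Finset.sum_congr rfl fun l _ => ?_
  linear_combination (-(Complex.exp (2 * π * Complex.I * r * l * a / q) *
          hurwitzSeries (1 - s + z) ((l : ℝ)/q) * hurwitzSeries (s + z) ((r : ℝ)/q))) * hpow
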